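/- Let s, t ∈ ℂ satisfy t³ − 21t + 37 = 0 and s^{18} = 26220t² + 67488t − 376912, and let d¹ be the 2×2 matrix over R = ℂ[u,v,x,y] with entries a = v − ((t² − 10t + 19)/2)·(s·u)⁹ + (t − 2)·y·(s·u)⁵ + y²·(s·u), b = −x + (2t − 5)·(s·u)⁶ + y·(s·u)², c = x² + y³ + (2t − 5)²·(s·u)^{12} + (2t − 5)·x·(s·u)⁶ + 2(2t − 5)·y·(s·u)⁸ + x·y·(s·u)² + y²·(s·u)⁴, d = −v − ((t² − 10t + 19)/2)·(s·u)⁹ + (t − 2)·y·(s·u)⁵ + y²·(s·u); set d⁰ = adjugate(d¹) and let d = [[0, d¹], [d⁰, 0]] be the 4×4 twisted differential of the resulting matrix factorisation of x³ + x·y³ − u^{18} − v². Let 𝔈 be the ℂ-vector space of 4×4 matrices F over R of block-diagonal form F = [[f⁰, 0], [0, f¹]] (with 2×2 blocks) satisfying d·F = F·d, and let 𝔑 ⊆ 𝔈 be the subspace of all matrices of the form d·H + H·d, where H ranges over 4×4 matrices over R of block off-diagonal form [[0, h¹], [h⁰, 0]]. Then the quotient ℂ-vector space 𝔈/𝔑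 (the space of even endomorphisms of the matrix factorisation up to homotopy) has dimension 27. -/

import Mathlib

/-!
With `w = s u`, the matrix `d¹` has the shape `[[v + g, p - x], [x² + x p + p² + y³, g - v]]`, where
`p = (2t - 5) w⁶ + y w²` and `g = w (y² + (t - 2) y w⁴ - e w⁸)`, `e = (t² - 10 t + 19) / 2`.

Since `(p - x)` and `(p - x, g - v)` are prime ideals and the latter does not contain `v + g`, the
relation `d¹ f¹ = f⁰ d¹` can be solved column by column, and it shows that every even endomorphism
is homotopic to a scalar. As `M + adj M = (tr M) 1` for `2 × 2` matrices, every `tr (d¹ Y)` is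
null-homotopic, so the null-homotopic scalars are precisely the ideal `I` generated by the entries
of `d¹`. Hence `𝔈/𝔑 ≅ R / I`.

Eliminating `v = 0` and `x = p` gives `R / I ≅ ℂ[w, y] / (g, q)` with `q = y³ + 3 p²`, an
intersection number of plane curves. The curve `g = 0` consists of the line `w = 0` and two branches
`y = z w⁴`, one for each root `z` of `z² + (t - 2) z = e`. On the line `q` restricts to `y³`, and on
a branch to `(z³ + 3 (z + 2t - 5)²) w¹²`, whose coefficient does not vanish; the length is therefore
`3 + 12 + 12 = 27`.
-/

open MvPolynomial

noncomputable section

/-- The polynomial ring `R = ℂ[u,v,x,y]`. -/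
abbrev R4 : Type := MvPolynomial (Fin 4) ℂ

def u : R4 := X 0
def v : R4 := X 1
def x : R4 := X 2
def y : R4 := X 3

/-- The matrix `d¹` of the E₇ orbifold equivalence. -/
def dE7 (s t : ℂ) : Matrix (Fin 2) (Fin 2) R4 :=
  !![v - C ((t^2 - 10*t + 19)/2) * (C s * u) ^ 9 + C (t - 2) * y * (C s * u) ^ 5
       + y ^ 2 * (C s * u),
     -x + C (2*t - 5) * (C s * u) ^ 6 + y * (C s * u) ^ 2;
     x ^ 2 + y ^ 3 + C ((2*t - 5)^2) * (C s * u) ^ 12 + C (2*t - 5) * x * (C s * u) ^ 6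
       + C (2*(2*t - 5)) * y * (C s * u) ^ 8 + x * y * (C s * u) ^ 2 + y ^ 2 * (C s * u) ^ 4,
     -v - C ((t^2 - 10*t + 19)/2) * (C s * u) ^ 9 + C (t - 2) * y * (C s * u) ^ 5
       + y ^ 2 * (C s * u)]

/-- The twisted differential `d = [[0, d¹], [d⁰, 0]]` with `d⁰` the adjugate of `d¹`. -/
def DE7 (s t : ℂ) : Matrix (Fin 2 ⊕ Fin 2) (Fin 2 ⊕ Fin 2) R4 :=
  Matrix.fromBlocks 0 (dE7 s t) (dE7 s t).adjugate 0

section Blocks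

variable {F G : Matrix (Fin 2 ⊕ Fin 2) (Fin 2 ⊕ Fin 2) R4} {c : ℂ}

lemma tb11_add : (F + G).toBlocks₁₁ = F.toBlocks₁₁ + G.toBlocks₁₁ := rfl
lemma tb12_add : (F + G).toBlocks₁₂ = F.toBlocks₁₂ + G.toBlocks₁₂ := rfl
lemma tb21_add : (F + G).toBlocks₂₁ = F.toBlocks₂₁ + G.toBlocks₂₁ := rfl
lemma tb22_add : (F + G).toBlocks₂₂ = F.toBlocks₂₂ + G.toBlocks₂₂ := rfl
lemma tb11_smul : (c • F).toBlocks₁₁ = c • F.toBlocks₁₁ := rfl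
lemma tb12_smul : (c • F).toBlocks₁₂ = c • F.toBlocks₁₂ := rfl
lemma tb21_smul : (c • F).toBlocks₂₁ = c • F.toBlocks₂₁ := rfl
lemma tb22_smul : (c • F).toBlocks₂₂ = c • F.toBlocks₂₂ := rfl

end Blocks

/-- The ℂ-vector space `𝔈` of even (block-diagonal) endomorphisms commuting with `D`. -/
def EvenEnd (D : Matrix (Fin 2 ⊕ Fin 2) (Fin 2 ⊕ Fin 2) R4) :
    Submodule ℂ (Matrix (Fin 2 ⊕ Fin 2) (Fin 2 ⊕ Fin 2) R4) where
  carrier := {F | F.toBlocks₁₂ = 0 ∧ F.toBlocks₂₁ = 0 ∧ D * F = F * D}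
  zero_mem' := ⟨rfl, rfl, by simp⟩
  add_mem' := by
    rintro F G ⟨hF1, hF2, hF3⟩ ⟨hG1, hG2, hG3⟩
    exact ⟨by rw [tb12_add, hF1, hG1, add_zero],
           by rw [tb21_add, hF2, hG2, add_zero],
           by rw [Matrix.mul_add, hF3, hG3, Matrix.add_mul]⟩
  smul_mem' := by
    rintro c F ⟨h1, h2, h3⟩
    exact ⟨by rw [tb12_smul, h1, smul_zero],
           by rw [tb21_smul, h2, smul_zero],
           by rw [Matrix.mul_smul, h3, Matrix.smul_mul]⟩

/-- The subspace `𝔑` of null-homotopic even endomorphisms `D·H + H·D`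
with `H` block off-diagonal. -/
def NullHtpy (D : Matrix (Fin 2 ⊕ Fin 2) (Fin 2 ⊕ Fin 2) R4) :
    Submodule ℂ (Matrix (Fin 2 ⊕ Fin 2) (Fin 2 ⊕ Fin 2) R4) where
  carrier := {F | ∃ H, H.toBlocks₁₁ = 0 ∧ H.toBlocks₂₂ = 0 ∧ F = D * H + H * D}
  zero_mem' := ⟨0, rfl, rfl, by simp⟩
  add_mem' := by
    rintro F G ⟨H, h1, h2, h3⟩ ⟨K, k1, k2, k3⟩
    exact ⟨H + K, by rw [tb11_add, h1, k1, add_zero],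
           by rw [tb22_add, h2, k2, add_zero],
           by rw [h3, k3, Matrix.mul_add, Matrix.add_mul]; abel⟩
  smul_mem' := by
    rintro c F ⟨H, h1, h2, h3⟩
    exact ⟨c • H, by rw [tb11_smul, h1, smul_zero],
           by rw [tb22_smul, h2, smul_zero],
           by rw [h3, smul_add, Matrix.mul_smul, Matrix.smul_mul]⟩

section Length

variable {K R S : Type*} [CommRing K] [CommRing R] [Algebra K R] [CommRing S] [Algebra K S]

theorem length_quotient_eq_of_surjective {φ : R →ₐ[K] S} (hφ : Function.Surjective φ)
    {I : Ideal R} (hI : RingHom.ker φ ≤ I) :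
    Module.length K (R ⧸ I) = Module.length K (S ⧸ I.map φ) := by
  let π : R →ₐ[K] S ⧸ I.map φ := (Ideal.Quotient.mkₐ K (I.map φ)).comp φ
  have hπ : Function.Surjective π := (Ideal.Quotient.mkₐ_surjective K _).comp hφ
  have hker : RingHom.ker π = I := by
    calc RingHom.ker π = (I.map φ).comap φ := by
          ext r; exact Ideal.Quotient.eq_zero_iff_mem
      _ = I ⊔ RingHom.ker φ := Ideal.comap_map_of_surjective φ hφ I
      _ = I := sup_eq_left.mpr hI
  have e : (R ⧸ I) ≃ₐ[K] S ⧸ I.map φ := (Ideal.quotientEquivAlgOfEq K hker.symm).trans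
    (Ideal.quotientKerAlgEquivOfSurjective hπ)
  exact e.toLinearEquiv.length_eq

open scoped Pointwise in
theorem length_quotient_span_mul_pair {f g q : R} (hf : ∀ a, q ∣ f * a → q ∣ a) :
    Module.length K (R ⧸ Ideal.span {f * g, q}) =
      Module.length K (R ⧸ Ideal.span {f, q}) + Module.length K (R ⧸ Ideal.span {g, q}) := by
  let B := R ⧸ Ideal.span {q}
  let π : R →ₐ[K] B := Ideal.Quotient.mkₐ K _
  have hpair (r : R) : Module.length K (R ⧸ Ideal.span {r, q}) =
      Module.length K (B ⧸ Ideal.span {π r}) := by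
    have hq : π q = 0 := Ideal.Quotient.eq_zero_iff_mem.mpr (Ideal.mem_span_singleton_self q)
    have hker : RingHom.ker π ≤ Ideal.span {r, q} :=
      (Ideal.Quotient.mkₐ_ker K _).trans_le (Ideal.span_mono (by simp))
    rw [length_quotient_eq_of_surjective (Ideal.Quotient.mkₐ_surjective K _) hker,
      Ideal.map_span, Set.image_pair]
    change Module.length K (B ⧸ Ideal.span {π r, π q}) = _
    rw [hq, Ideal.span_pair_zero]
  have hπf : π f ∈ nonZeroDivisors B := by
    refine mem_nonZeroDivisors_iff_left.mpr fun b hb => ?_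
    obtain ⟨a, rfl⟩ := Ideal.Quotient.mk_surjective b
    have h : f * a ∈ Ideal.span {q} := Ideal.Quotient.eq_zero_iff_mem.mp hb
    exact Ideal.Quotient.eq_zero_iff_mem.mpr
      (Ideal.mem_span_singleton.mpr (hf a (Ideal.mem_span_singleton.mp h)))
  have hsmul : π f • Ideal.span {π g} = Ideal.span {π (f * g)} := by
    rw [map_mul, ← smul_eq_mul, ← Set.smul_set_singleton]
    exact Submodule.smul_span _ _
  rw [hpair, hpair, hpair, ← hsmul, add_comm]
  exact Module.length_eq_add_of_exact
    ((Ideal.mulQuot (π f) (Ideal.span {π g})).restrictScalars K)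
    ((Ideal.quotOfMul (π f) (Ideal.span {π g})).restrictScalars K)
    (Ideal.mulQuot_injective _ hπf) (Ideal.quotOfMul_surjective _)
    (Ideal.exact_mulQuot_quotOfMul _)

end Length

section Curve

variable {K R : Type*} [Field K] [CommRing R] [Algebra K R] {φ : R →ₐ[K] Polynomial K} {f q : R}

theorem length_quotient_span_pair_of_ker_eq_span (hφ : Function.Surjective φ)
    (hker : RingHom.ker φ = Ideal.span {f}) (hq : φ q ≠ 0) :
    Module.length K (R ⧸ Ideal.span {f, q}) = (φ q).natDegree := by
  have hf : φ f = 0 := by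
    rw [← RingHom.mem_ker, hker]
    exact Ideal.mem_span_singleton_self f
  have hle : RingHom.ker φ ≤ Ideal.span {f, q} := hker.trans_le (Ideal.span_mono (by simp))
  rw [length_quotient_eq_of_surjective hφ hle, Ideal.map_span, Set.image_pair]
  change Module.length K (Polynomial K ⧸ Ideal.span {φ f, φ q}) = _
  rw [hf, Ideal.span_insert_zero, ← finrank_quotient_span_eq_natDegree]
  have : Module.Finite K (Polynomial K ⧸ Ideal.span {φ q}) := (AdjoinRoot.powerBasis hq).finite
  exact Module.length_eq_finrank K _

theorem length_quotient_span_mul_pair_of_ker_eq_span [IsDomain R] (hφ : Function.Surjective φ)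
    (hf : f ≠ 0) (hker : RingHom.ker φ = Ideal.span {f}) (hq : φ q ≠ 0) (g : R) :
    Module.length K (R ⧸ Ideal.span {f * g, q}) =
      (φ q).natDegree + Module.length K (R ⧸ Ideal.span {g, q}) := by
  have hprime : Prime f := (Ideal.span_singleton_prime hf).mp (hker ▸ RingHom.ker_isPrime φ)
  have hfq : ¬ f ∣ q := by
    rwa [← Ideal.mem_span_singleton, ← hker, RingHom.mem_ker]
  rw [length_quotient_span_mul_pair, length_quotient_span_pair_of_ker_eq_span hφ hker hq]
  rintro a ⟨b, hab⟩
  obtain ⟨c, rfl⟩ := (hprime.dvd_or_dvd (Dvd.intro a hab)).resolve_left hfq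
  exact ⟨c, mul_left_cancel₀ hf (by linear_combination hab)⟩

end Curve

section Substitution

variable {σ K B : Type*} [CommRing K] [CommRing B] [Algebra K B]

theorem ker_eq_span_of_sub_X_mem {φ : MvPolynomial σ K →ₐ[K] B} {ψ : B →ₐ[K] MvPolynomial σ K}
    {s : Set (MvPolynomial σ K)} (hs : ∀ f ∈ s, φ f = 0)
    (hψ : ∀ i, ψ (φ (X i)) - X i ∈ Ideal.span s) : RingHom.ker φ = Ideal.span s := by
  refine le_antisymm (fun f hf => ?_) (Ideal.span_le.mpr hs)
  have hmk : (Ideal.Quotient.mkₐ K (Ideal.span s)).comp (ψ.comp φ) =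
      Ideal.Quotient.mkₐ K (Ideal.span s) :=
    algHom_ext fun i => Ideal.Quotient.eq.mpr (hψ i)
  have h := DFunLike.congr_fun hmk f
  rw [AlgHom.comp_apply, AlgHom.comp_apply, (RingHom.mem_ker).mp hf, map_zero, map_zero] at h
  exact Ideal.Quotient.eq_zero_iff_mem.mp h.symm

end Substitution

section PlaneCurves

variable {K : Type*} [Field K] {c : Fin 2 → Polynomial K} {i j : Fin 2}

theorem aeval_aeval_X (hc : c i = Polynomial.X) (P : Polynomial K) :
    aeval c (Polynomial.aeval (X i : MvPolynomial (Fin 2) K) P) = P := by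
  have h : (aeval c).comp (Polynomial.aeval (X i : MvPolynomial (Fin 2) K)) = AlgHom.id K _ := by
    ext; simp [hc]
  exact DFunLike.congr_fun h P

theorem ker_aeval_eq_span (hij : i ≠ j) (hc : c i = Polynomial.X) :
    RingHom.ker (aeval (R := K) c) =
      Ideal.span {(X j : MvPolynomial (Fin 2) K) - Polynomial.aeval (X i) (c j)} := by
  refine ker_eq_span_of_sub_X_mem (ψ := Polynomial.aeval (X i : MvPolynomial (Fin 2) K))
    ?_ fun k => ?_
  · rintro _ rfl
    rw [map_sub, aeval_X, aeval_aeval_X hc, sub_self]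
  · obtain rfl | rfl : k = i ∨ k = j := by omega
    · simp [hc]
    · rw [aeval_X, ← Ideal.neg_mem_iff, neg_sub]
      exact Ideal.mem_span_singleton_self _

theorem X_sub_aeval_X_ne_zero (hij : i ≠ j) (P : Polynomial K) :
    (X j : MvPolynomial (Fin 2) K) - Polynomial.aeval (X i) P ≠ 0 := by
  intro h
  have h₁ := congrArg (aeval (Function.update (fun _ => Polynomial.X) j (P + 1))) h
  rw [map_sub, aeval_X, aeval_aeval_X (Function.update_of_ne hij _ _), Function.update_self,
    add_sub_cancel_left, map_zero] at h₁
  exact one_ne_zero h₁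

theorem length_quotient_span_graph_mul_pair (hij : i ≠ j) (hc : c i = Polynomial.X)
    {q : MvPolynomial (Fin 2) K} (hq : aeval c q ≠ 0) (g : MvPolynomial (Fin 2) K) :
    Module.length K (MvPolynomial (Fin 2) K ⧸
        Ideal.span {(X j - Polynomial.aeval (X i) (c j)) * g, q}) =
      (aeval c q).natDegree + Module.length K (MvPolynomial (Fin 2) K ⧸ Ideal.span {g, q}) :=
  length_quotient_span_mul_pair_of_ker_eq_span (fun P => ⟨_, aeval_aeval_X hc P⟩)
    (X_sub_aeval_X_ne_zero hij _) (ker_aeval_eq_span hij hc) hq g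

/-- The off-diagonal polynomial `p = m w⁶ + y w²` of `d¹`, with `w = X 0` and `y = X 1`. -/
def offDiagPoly (m : K) : MvPolynomial (Fin 2) K :=
  C m * X 0 ^ 6 + X 1 * X 0 ^ 2

/-- The polynomial `3 p² + y³` to which the lower left entry `x² + x p + p² + y³` of `d¹` restricts
on `x = p`; as above, `w = X 0` and `y = X 1`. -/
def lowerLeftCurve (m : K) : MvPolynomial (Fin 2) K :=
  3 * offDiagPoly m ^ 2 + X 1 ^ 3

theorem aeval_lowerLeftCurve_line (m : K) :
    aeval ![0, Polynomial.X] (lowerLeftCurve m) = (Polynomial.X ^ 3 : Polynomial K) := by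
  simp [lowerLeftCurve, offDiagPoly]

theorem aeval_lowerLeftCurve_branch (m z : K) :
    aeval ![Polynomial.X, Polynomial.C z * Polynomial.X ^ 4] (lowerLeftCurve m) =
      Polynomial.C (z ^ 3 + 3 * (z + m) ^ 2) * Polynomial.X ^ 12 := by
  simp only [lowerLeftCurve, offDiagPoly, map_add, map_mul, map_pow, map_ofNat, algHom_C, aeval_X,
    Matrix.cons_val_zero, Matrix.cons_val_one, Polynomial.algebraMap_eq]
  ring

theorem length_quotient_span_line_mul (m : K) (g : MvPolynomial (Fin 2) K) :
    Module.length K (MvPolynomial (Fin 2) K ⧸ Ideal.span {X 0 * g, lowerLeftCurve m}) =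
      3 + Module.length K (MvPolynomial (Fin 2) K ⧸ Ideal.span {g, lowerLeftCurve m}) := by
  have h := length_quotient_span_graph_mul_pair (i := 1) (j := 0) (c := ![0, Polynomial.X])
    one_ne_zero rfl (q := lowerLeftCurve m)
    (by rw [aeval_lowerLeftCurve_line]; exact pow_ne_zero 3 Polynomial.X_ne_zero) g
  rwa [aeval_lowerLeftCurve_line, Polynomial.natDegree_X_pow, Matrix.cons_val_zero, map_zero,
    sub_zero] at h

theorem length_quotient_span_branch_mul {m z : K} (hz : z ^ 3 + 3 * (z + m) ^ 2 ≠ 0)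
    (g : MvPolynomial (Fin 2) K) :
    Module.length K (MvPolynomial (Fin 2) K ⧸
        Ideal.span {(X 1 - C z * X 0 ^ 4) * g, lowerLeftCurve m}) =
      12 + Module.length K (MvPolynomial (Fin 2) K ⧸ Ideal.span {g, lowerLeftCurve m}) := by
  have h := length_quotient_span_graph_mul_pair (i := 0) (j := 1)
    (c := ![Polynomial.X, Polynomial.C z * Polynomial.X ^ 4]) zero_ne_one rfl
    (q := lowerLeftCurve m) (by simpa [aeval_lowerLeftCurve_branch, -map_add, -map_mul] using hz) g
  rwa [aeval_lowerLeftCurve_branch, Polynomial.natDegree_C_mul_X_pow _ _ hz,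
    Matrix.cons_val_one, Matrix.cons_val_zero, map_mul, map_pow, Polynomial.aeval_C,
    Polynomial.aeval_X, algebraMap_eq] at h

theorem length_quotient_span_line_mul_branches {m α β : K} (hα : α ^ 3 + 3 * (α + m) ^ 2 ≠ 0)
    (hβ : β ^ 3 + 3 * (β + m) ^ 2 ≠ 0) :
    Module.length K (MvPolynomial (Fin 2) K ⧸ Ideal.span
      {X 0 * ((X 1 - C α * X 0 ^ 4) * (X 1 - C β * X 0 ^ 4)), lowerLeftCurve m}) = 27 := by
  have hone : Module.length K (MvPolynomial (Fin 2) K ⧸ Ideal.span {1, lowerLeftCurve m}) = 0 := by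
    rw [Module.length_eq_zero_iff, Ideal.Quotient.subsingleton_iff]
    exact Ideal.eq_top_of_isUnit_mem _ (Ideal.subset_span (by simp)) isUnit_one
  rw [length_quotient_span_line_mul, length_quotient_span_branch_mul hα,
    ← mul_one (X 1 - C β * X 0 ^ 4), length_quotient_span_branch_mul hβ, hone]
  norm_num

end PlaneCurves

section EntryIdeal

variable {m n R : Type*} [CommRing R]

/-- The ideal generated by the entries of a matrix. -/
def entryIdeal (A : Matrix m n R) : Ideal R :=
  Ideal.span (Set.range fun i : m × n => A i.1 i.2)

theorem apply_mem_entryIdeal (A : Matrix m n R) (i : m) (j : n) : A i j ∈ entryIdeal A :=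
  Ideal.subset_span ⟨(i, j), rfl⟩

theorem map_mk_entryIdeal_eq_zero (A : Matrix m n R) :
    A.map (Ideal.Quotient.mk (entryIdeal A)) = 0 := by
  ext i j
  exact Ideal.Quotient.eq_zero_iff_mem.mpr (apply_mem_entryIdeal A i j)

theorem exists_trace_mul_eq [Fintype m] [Fintype n] {A : Matrix m n R} {r : R}
    (hr : r ∈ entryIdeal A) : ∃ Y : Matrix n m R, (A * Y).trace = r := by
  classical
  induction hr using Submodule.span_induction with
  | mem _ h =>
    obtain ⟨⟨i, j⟩, rfl⟩ := h
    exact ⟨Matrix.single j i 1, by rw [Matrix.trace_mul_single]; simp⟩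
  | zero => exact ⟨0, by simp⟩
  | add _ _ _ _ h₁ h₂ =>
    obtain ⟨Y₁, rfl⟩ := h₁
    obtain ⟨Y₂, rfl⟩ := h₂
    exact ⟨Y₁ + Y₂, by rw [Matrix.mul_add, Matrix.trace_add]⟩
  | smul c _ _ h =>
    obtain ⟨Y, rfl⟩ := h
    exact ⟨c • Y, by rw [Matrix.mul_smul, Matrix.trace_smul]⟩

theorem entryIdeal_fin_two (A : Matrix (Fin 2) (Fin 2) R) :
    entryIdeal A = Ideal.span {A 0 0, A 0 1, A 1 0, A 1 1} := by
  rw [entryIdeal]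
  congr 1
  ext r
  simp [eq_comm, Fin.exists_fin_two, or_assoc]

theorem add_adjugate_eq_trace_smul_one (A : Matrix (Fin 2) (Fin 2) R) :
    A + A.adjugate = A.trace • (1 : Matrix (Fin 2) (Fin 2) R) := by
  ext i j
  fin_cases i <;> fin_cases j <;>
    simp [Matrix.adjugate_fin_two, Matrix.trace_fin_two, add_comm]

theorem exists_smul_one_eq_mul_add_mul_iff {A : Matrix (Fin 2) (Fin 2) R} {r : R} :
    (∃ h₀ h₁, r • (1 : Matrix (Fin 2) (Fin 2) R) = A * h₀ + h₁ * A.adjugate ∧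
      r • (1 : Matrix (Fin 2) (Fin 2) R) = A.adjugate * h₁ + h₀ * A) ↔ r ∈ entryIdeal A := by
  constructor
  · rintro ⟨h₀, h₁, h, -⟩
    let π := (Ideal.Quotient.mk (entryIdeal A)).mapMatrix (m := Fin 2)
    have hA : π A = 0 := map_mk_entryIdeal_eq_zero A
    have hA' : π A.adjugate = 0 := by
      rw [RingHom.map_adjugate]
      exact (congrArg _ hA).trans Matrix.adjugate_zero
    have hr : π (r • 1) = 0 := by
      rw [h, map_add, map_mul, map_mul, hA, hA', zero_mul, mul_zero, add_zero]
    simpa [π, Ideal.Quotient.eq_zero_iff_mem] using congrFun₂ hr 0 0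
  · intro hr
    obtain ⟨Y, rfl⟩ := exists_trace_mul_eq hr
    refine ⟨Y, Y.adjugate, ?_, ?_⟩
    · rw [← add_adjugate_eq_trace_smul_one, Matrix.adjugate_mul_distrib]
    · rw [Matrix.trace_mul_comm, ← add_adjugate_eq_trace_smul_one, Matrix.adjugate_mul_distrib,
        add_comm]

end EntryIdeal

section Koszul

variable {R : Type*} [CommRing R] {A f₀ f₁ : Matrix (Fin 2) (Fin 2) R}

open Matrix

theorem exists_eq_mulVec_of_mulVec_eq_smul [IsDomain R] (hb : Prime (A 0 1)) (ha : ¬ A 0 1 ∣ A 0 0)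
    (hd : ¬ A 0 1 ∣ A 1 1) {z w : Fin 2 → R} (h : A *ᵥ z = A 0 1 • w) : ∃ k, w = A *ᵥ k := by
  have h₀ : A 0 0 * z 0 + A 0 1 * z 1 = A 0 1 * w 0 := by
    simpa [mulVec, dotProduct] using congrFun h 0
  have h₁ : A 1 0 * z 0 + A 1 1 * z 1 = A 0 1 * w 1 := by
    simpa [mulVec, dotProduct] using congrFun h 1
  obtain ⟨k₀, hk₀⟩ : A 0 1 ∣ z 0 :=
    (hb.dvd_or_dvd ⟨w 0 - z 1, by linear_combination h₀⟩).resolve_left ha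
  obtain ⟨k₁, hk₁⟩ : A 0 1 ∣ z 1 :=
    (hb.dvd_or_dvd ⟨w 1 - A 1 0 * k₀, by linear_combination h₁ - A 1 0 * hk₀⟩).resolve_left hd
  obtain rfl : z = A 0 1 • ![k₀, k₁] := by
    ext i
    fin_cases i <;> simp [hk₀, hk₁]
  rw [mulVec_smul] at h
  exact ⟨_, (smul_right_injective _ hb.ne_zero h).symm⟩

theorem exists_eq_mul_of_col_one_eq_zero [IsDomain R] (hb : Prime (A 0 1)) (ha : ¬ A 0 1 ∣ A 0 0)
    (hd : ¬ A 0 1 ∣ A 1 1) (h : A * f₁ = f₀ * A) (h₀₁ : f₀ 0 1 = 0) (h₁₁ : f₀ 1 1 = 0) :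
    ∃ Y, f₀ = A * Y := by
  have hcol : A *ᵥ (fun i => f₁ i 1) = A 0 1 • fun i => f₀ i 0 := by
    ext i
    have hi : f₀ i 1 = 0 := by fin_cases i <;> assumption
    calc (A * f₁) i 1 = f₀ i 0 * A 0 1 + f₀ i 1 * A 1 1 := by
          rw [h, mul_apply, Fin.sum_univ_two]
      _ = A 0 1 * f₀ i 0 := by rw [hi, zero_mul, add_zero, mul_comm]
  obtain ⟨k, hk⟩ := exists_eq_mulVec_of_mulVec_eq_smul hb ha hd hcol
  refine ⟨of fun i j => if j = 0 then k i else 0, ?_⟩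
  ext i j
  fin_cases j
  · exact congrFun hk i
  · fin_cases i <;> simpa [mul_apply]

theorem exists_apply_zero_one_eq (hb : Prime (A 0 1)) (hd : ¬ A 0 1 ∣ A 1 1)
    (hbd : (Ideal.span {A 0 1, A 1 1}).IsPrime) (ha : A 0 0 ∉ Ideal.span {A 0 1, A 1 1})
    (h : A * f₁ = f₀ * A) : ∃ n l, f₀ 0 1 = A 0 0 * n + A 0 1 * l := by
  have h₀₁ : A 0 0 * f₁ 0 1 + A 0 1 * f₁ 1 1 = f₀ 0 0 * A 0 1 + f₀ 0 1 * A 1 1 := by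
    simpa [mul_apply] using congrFun₂ h 0 1
  have hmem : A 0 0 * f₁ 0 1 ∈ Ideal.span {A 0 1, A 1 1} :=
    Ideal.mem_span_pair.mpr ⟨f₀ 0 0 - f₁ 1 1, f₀ 0 1, by linear_combination -h₀₁⟩
  obtain ⟨m, n, hmn⟩ := Ideal.mem_span_pair.mp ((hbd.mem_or_mem hmem).resolve_left ha)
  obtain ⟨l, hl⟩ : A 0 1 ∣ f₀ 0 1 - A 0 0 * n :=
    (hb.dvd_or_dvd ⟨A 0 0 * m + f₁ 1 1 - f₀ 0 0,
      by linear_combination -h₀₁ - A 0 0 * hmn⟩).resolve_left hd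
  exact ⟨n, l, by linear_combination hl⟩

theorem eq_smul_one_add_mul_of_det_ne_zero {n : Type*} [Fintype n] [DecidableEq n] [IsDomain R]
    {A f Y : Matrix n n R} {r : R} (hA : A.det ≠ 0) (h : A * f = (r • 1 + A * Y) * A) :
    f = r • 1 + Y * A := by
  have hcomm : A * f = A * (r • 1 + Y * A) := by
    simp only [h, Matrix.add_mul, Matrix.mul_add, Matrix.smul_mul, Matrix.mul_smul,
      Matrix.one_mul, Matrix.mul_one, Matrix.mul_assoc]
  have hadj := congrArg (A.adjugate * ·) hcomm
  simp only [← Matrix.mul_assoc, adjugate_mul, Matrix.smul_mul, Matrix.one_mul] at hadj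
  exact smul_right_injective _ hA hadj

theorem exists_eq_smul_one_add_mul [IsDomain R] (hb : Prime (A 0 1)) (hd : ¬ A 0 1 ∣ A 1 1)
    (hbd : (Ideal.span {A 0 1, A 1 1}).IsPrime) (ha : A 0 0 ∉ Ideal.span {A 0 1, A 1 1})
    (h : A * f₁ = f₀ * A) : ∃ (r : R) (Y : Matrix (Fin 2) (Fin 2) R),
      f₀ = r • 1 + A * Y ∧ f₁ = r • 1 + Y * A := by
  have hba : ¬ A 0 1 ∣ A 0 0 := fun hdvd =>
    ha (Ideal.mem_of_dvd _ hdvd (Ideal.subset_span (by simp)))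
  have hdet : A.det ≠ 0 := fun h0 => by
    rw [det_fin_two, sub_eq_zero] at h0
    exact (hb.dvd_or_dvd (h0 ▸ dvd_mul_right _ _)).elim hba hd
  obtain ⟨n, l, hnl⟩ := exists_apply_zero_one_eq hb hd hbd ha h
  let r := f₀ 1 1 - A 1 0 * n - A 1 1 * l
  let Z : Matrix (Fin 2) (Fin 2) R := !![0, n; 0, l]
  have hsub : A * (f₁ - r • 1 - Z * A) = (f₀ - r • 1 - A * Z) * A := by
    simp only [Matrix.mul_sub, Matrix.sub_mul, h, Matrix.smul_mul, Matrix.mul_smul,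
      Matrix.one_mul, Matrix.mul_one, Matrix.mul_assoc]
  obtain ⟨Y, hY⟩ := exists_eq_mul_of_col_one_eq_zero hb hba hd hsub
    (by simp [Z, mul_apply, hnl]) (by simp [Z, mul_apply, r]; ring)
  have h₀ : f₀ = r • 1 + A * (Z + Y) := by
    rw [Matrix.mul_add, ← hY]
    abel
  exact ⟨r, _, h₀, eq_smul_one_add_mul_of_det_ne_zero hdet (h₀ ▸ h)⟩

end Koszul

section HomotopyClasses

variable {A f₀ f₁ : Matrix (Fin 2) (Fin 2) R4} {r : R4}

/-- The twisted differential of the matrix factorisation `(adj A, A)` of `det A`. -/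
def twistedDifferential (A : Matrix (Fin 2) (Fin 2) R4) :
    Matrix (Fin 2 ⊕ Fin 2) (Fin 2 ⊕ Fin 2) R4 :=
  Matrix.fromBlocks 0 A A.adjugate 0

theorem exists_eq_fromBlocks_of_mem_evenEnd {F : Matrix (Fin 2 ⊕ Fin 2) (Fin 2 ⊕ Fin 2) R4}
    (hF : F ∈ EvenEnd (twistedDifferential A)) :
    ∃ f₀ f₁, F = Matrix.fromBlocks f₀ 0 0 f₁ ∧ A * f₁ = f₀ * A := by
  obtain ⟨h₁₂, h₂₁, hcomm⟩ := hF
  have hF : F = Matrix.fromBlocks F.toBlocks₁₁ 0 0 F.toBlocks₂₂ := by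
    conv_lhs => rw [← Matrix.fromBlocks_toBlocks F, h₁₂, h₂₁]
  rw [hF, twistedDifferential, Matrix.fromBlocks_multiply, Matrix.fromBlocks_multiply] at hcomm
  exact ⟨_, _, hF, by simpa using (Matrix.fromBlocks_inj.mp hcomm).2.1⟩

theorem fromBlocks_mem_nullHtpy_iff :
    Matrix.fromBlocks f₀ 0 0 f₁ ∈ NullHtpy (twistedDifferential A) ↔
      ∃ h₀ h₁, f₀ = A * h₀ + h₁ * A.adjugate ∧ f₁ = A.adjugate * h₁ + h₀ * A := by
  have hcomp (h₀ h₁ : Matrix (Fin 2) (Fin 2) R4) :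
      twistedDifferential A * Matrix.fromBlocks 0 h₁ h₀ 0 +
          Matrix.fromBlocks 0 h₁ h₀ 0 * twistedDifferential A =
        Matrix.fromBlocks (A * h₀ + h₁ * A.adjugate) 0 0 (A.adjugate * h₁ + h₀ * A) := by
    simp [twistedDifferential, Matrix.fromBlocks_multiply, Matrix.fromBlocks_add]
  constructor
  · rintro ⟨H, h₁₁, h₂₂, hH⟩
    rw [← Matrix.fromBlocks_toBlocks H, h₁₁, h₂₂, hcomp] at hH
    obtain ⟨h₀, -, -, h₁⟩ := Matrix.fromBlocks_inj.mp hH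
    exact ⟨_, _, h₀, h₁⟩
  · rintro ⟨h₀, h₁, rfl, rfl⟩
    exact ⟨Matrix.fromBlocks 0 h₁ h₀ 0, rfl, rfl, (hcomp h₀ h₁).symm⟩

theorem smul_one_eq_fromBlocks (r : R4) :
    r • (1 : Matrix (Fin 2 ⊕ Fin 2) (Fin 2 ⊕ Fin 2) R4) =
      Matrix.fromBlocks (r • 1) 0 0 (r • 1) := by
  rw [← Matrix.fromBlocks_one, Matrix.fromBlocks_smul, smul_zero]

theorem smul_one_mem_nullHtpy_iff :
    r • (1 : Matrix (Fin 2 ⊕ Fin 2) (Fin 2 ⊕ Fin 2) R4) ∈ NullHtpy (twistedDifferential A) ↔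
      r ∈ entryIdeal A := by
  rw [smul_one_eq_fromBlocks, fromBlocks_mem_nullHtpy_iff, exists_smul_one_eq_mul_add_mul_iff]

/-- The action of `R` on the matrix factorisation with differential `D`, as a map into its even
endomorphisms. -/
def scalarEnd (D : Matrix (Fin 2 ⊕ Fin 2) (Fin 2 ⊕ Fin 2) R4) : R4 →ₗ[ℂ] EvenEnd D where
  toFun r := ⟨r • 1, by
    rw [smul_one_eq_fromBlocks, Matrix.toBlocks_fromBlocks₁₂],
    by rw [smul_one_eq_fromBlocks, Matrix.toBlocks_fromBlocks₂₁], by simp⟩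
  map_add' r r' := Subtype.ext (add_smul r r' 1)
  map_smul' c r := Subtype.ext (smul_assoc c r 1)

theorem exists_sub_scalarEnd_mem_comap_nullHtpy (hb : Prime (A 0 1)) (hd : ¬ A 0 1 ∣ A 1 1)
    (hbd : (Ideal.span {A 0 1, A 1 1}).IsPrime) (ha : A 0 0 ∉ Ideal.span {A 0 1, A 1 1})
    (F : EvenEnd (twistedDifferential A)) :
    ∃ r, F - scalarEnd _ r ∈
      (NullHtpy (twistedDifferential A)).comap (EvenEnd (twistedDifferential A)).subtype := by
  obtain ⟨f₀, f₁, hF, hcomm⟩ := exists_eq_fromBlocks_of_mem_evenEnd F.2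
  obtain ⟨r, Y, rfl, rfl⟩ := exists_eq_smul_one_add_mul hb hd hbd ha hcomm
  have hsub : (F - r • 1 : Matrix (Fin 2 ⊕ Fin 2) (Fin 2 ⊕ Fin 2) R4) =
      Matrix.fromBlocks (A * Y) 0 0 (Y * A) := by
    rw [hF, smul_one_eq_fromBlocks, sub_eq_iff_eq_add', Matrix.fromBlocks_add]
    simp
  refine ⟨r, ?_⟩
  change (F - r • 1 : Matrix (Fin 2 ⊕ Fin 2) (Fin 2 ⊕ Fin 2) R4) ∈
    NullHtpy (twistedDifferential A)
  rw [hsub, fromBlocks_mem_nullHtpy_iff]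
  exact ⟨Y, 0, by simp⟩

theorem length_evenEnd_quotient_nullHtpy (hb : Prime (A 0 1)) (hd : ¬ A 0 1 ∣ A 1 1)
    (hbd : (Ideal.span {A 0 1, A 1 1}).IsPrime) (ha : A 0 0 ∉ Ideal.span {A 0 1, A 1 1}) :
    Module.length ℂ (↥(EvenEnd (twistedDifferential A)) ⧸
        (NullHtpy (twistedDifferential A)).comap (EvenEnd (twistedDifferential A)).subtype) =
      Module.length ℂ (R4 ⧸ entryIdeal A) := by
  set N := (NullHtpy (twistedDifferential A)).comap (EvenEnd (twistedDifferential A)).subtype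
  let Ψ : R4 →ₗ[ℂ] ↥(EvenEnd (twistedDifferential A)) ⧸ N := N.mkQ ∘ₗ scalarEnd _
  have hΨ : Function.Surjective Ψ := by
    intro q
    obtain ⟨F, rfl⟩ := N.mkQ_surjective q
    obtain ⟨r, hr⟩ := exists_sub_scalarEnd_mem_comap_nullHtpy hb hd hbd ha F
    exact ⟨r, ((Submodule.Quotient.eq N).mpr hr).symm⟩
  have hker : LinearMap.ker Ψ = (entryIdeal A).restrictScalars ℂ := by
    ext r
    exact (Submodule.Quotient.mk_eq_zero N).trans smul_one_mem_nullHtpy_iff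
  exact ((Submodule.quotEquivOfEq _ _ hker.symm).trans
    (Ψ.quotKerEquivOfSurjective hΨ)).length_eq.symm

end HomotopyClasses

section GraphMatrix

variable {s : ℂ} {g p q₁ q₂ : MvPolynomial (Fin 2) ℂ} {c : R4}

/-- The inclusion of `ℂ[w, y]` into `R` with `w = s u`. -/
def planeInclusion (s : ℂ) : MvPolynomial (Fin 2) ℂ →ₐ[ℂ] R4 :=
  aeval ![C s * u, y]

/-- Restriction of functions to the graph `v = q₁, x = q₂` over the `(w, y)`-plane. -/
def restrictGraph (s : ℂ) (q₁ q₂ : MvPolynomial (Fin 2) ℂ) : R4 →ₐ[ℂ] MvPolynomial (Fin 2) ℂ :=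
  aeval ![C s⁻¹ * X 0, q₁, q₂, X 1]

theorem restrictGraph_v : restrictGraph s q₁ q₂ v = q₁ := by simp [restrictGraph, v]

theorem restrictGraph_x : restrictGraph s q₁ q₂ x = q₂ := by simp [restrictGraph, x]

theorem restrictGraph_y : restrictGraph s q₁ q₂ y = X 1 := by simp [restrictGraph, y]

theorem restrictGraph_planeInclusion (hs : s ≠ 0) (f : MvPolynomial (Fin 2) ℂ) :
    restrictGraph s q₁ q₂ (planeInclusion s f) = f := by
  have h : (restrictGraph s q₁ q₂).comp (planeInclusion s) = AlgHom.id ℂ _ := by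
    ext i
    fin_cases i
    · simp [restrictGraph, planeInclusion, u, ← mul_assoc, ← C_mul, hs]
    · simp [restrictGraph, planeInclusion, y]
  exact DFunLike.congr_fun h f

theorem restrictGraph_surjective (hs : s ≠ 0) : Function.Surjective (restrictGraph s q₁ q₂) :=
  fun f => ⟨_, restrictGraph_planeInclusion hs f⟩

theorem ker_restrictGraph (hs : s ≠ 0) :
    RingHom.ker (restrictGraph s q₁ q₂) =
      Ideal.span {planeInclusion s q₂ - x, planeInclusion s q₁ - v} := by
  refine ker_eq_span_of_sub_X_mem (ψ := planeInclusion s) ?_ fun i => ?_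
  · rintro _ (rfl | rfl)
    · rw [map_sub, restrictGraph_x, restrictGraph_planeInclusion hs, sub_self]
    · rw [map_sub, restrictGraph_v, restrictGraph_planeInclusion hs, sub_self]
  · fin_cases i
    · simp [restrictGraph, planeInclusion, u, ← mul_assoc, ← C_mul, hs]
    · exact Ideal.subset_span (by simp [restrictGraph, v])
    · exact Ideal.subset_span (by simp [restrictGraph, x])
    · simp [restrictGraph, planeInclusion, y]

theorem prime_planeInclusion_sub_x (s : ℂ) (p : MvPolynomial (Fin 2) ℂ) :
    Prime (planeInclusion s p - x) := by
  let φ (r : R4) : R4 →ₐ[ℂ] R4 := aeval ![u, v, r, y]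
  have hφ (r : R4) : φ r (planeInclusion s p - x) = planeInclusion s p - r := by
    have h : (φ r).comp (planeInclusion s) = planeInclusion s := by
      ext i
      fin_cases i <;> simp [φ, planeInclusion, u, y]
    rw [map_sub, ← AlgHom.comp_apply, h]
    simp [φ, x]
  have hker : RingHom.ker (φ (planeInclusion s p)) = Ideal.span {planeInclusion s p - x} := by
    refine ker_eq_span_of_sub_X_mem (ψ := AlgHom.id ℂ R4) ?_ fun i => ?_
    · rintro _ rfl
      rw [hφ, sub_self]
    · fin_cases i
      · simp [φ, u]
      · simp [φ, v]
      · exact Ideal.subset_span (by simp [φ, x])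
      · simp [φ, y]
  have hne : planeInclusion s p - x ≠ 0 := fun h => by
    simpa [h] using hφ (planeInclusion s p - 1)
  exact (Ideal.span_singleton_prime hne).mp (hker ▸ RingHom.ker_isPrime _)

/-- The shape of the matrices `d¹`: up to signs, `v` and `x` occur linearly in three entries, with
coefficients from the `(w, y)`-plane. -/
def graphMatrix (s : ℂ) (g p : MvPolynomial (Fin 2) ℂ) (c : R4) : Matrix (Fin 2) (Fin 2) R4 :=
  !![v + planeInclusion s g, planeInclusion s p - x; c, planeInclusion s g - v]

theorem length_evenEnd_quotient_nullHtpy_graphMatrix (hs : s ≠ 0) (hg : g ≠ 0) :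
    Module.length ℂ (↥(EvenEnd (twistedDifferential (graphMatrix s g p c))) ⧸
        (NullHtpy (twistedDifferential (graphMatrix s g p c))).comap
          (EvenEnd (twistedDifferential (graphMatrix s g p c))).subtype) =
      Module.length ℂ (R4 ⧸ entryIdeal (graphMatrix s g p c)) := by
  have hker : RingHom.ker (restrictGraph s g p) = Ideal.span
      {graphMatrix s g p c 0 1, graphMatrix s g p c 1 1} := ker_restrictGraph hs
  refine length_evenEnd_quotient_nullHtpy (prime_planeInclusion_sub_x s p) ?_
    (hker ▸ RingHom.ker_isPrime _) ?_
  · rintro ⟨a, ha⟩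
    have h := congrArg (restrictGraph s (g - 1) p) ha
    simp [graphMatrix, restrictGraph_v, restrictGraph_x, restrictGraph_planeInclusion hs] at h
  · rw [← hker, RingHom.mem_ker]
    change restrictGraph s g p (v + planeInclusion s g) ≠ 0
    rw [map_add, restrictGraph_v, restrictGraph_planeInclusion hs, ← two_mul]
    exact mul_ne_zero two_ne_zero hg

theorem map_entryIdeal_graphMatrix (hs : s ≠ 0) :
    (entryIdeal (graphMatrix s g p c)).map (restrictGraph s 0 p) =
      Ideal.span {g, restrictGraph s 0 p c} := by
  rw [entryIdeal_fin_two, Ideal.map_span, Set.pair_comm]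
  simp [graphMatrix, Set.image_insert_eq, restrictGraph_v, restrictGraph_x,
    restrictGraph_planeInclusion hs]

theorem ker_restrictGraph_le_entryIdeal (hs : s ≠ 0) :
    RingHom.ker (restrictGraph s 0 p) ≤ entryIdeal (graphMatrix s g p c) := by
  rw [ker_restrictGraph hs, Ideal.span_le, map_zero, zero_sub]
  rintro _ (rfl | rfl)
  · exact apply_mem_entryIdeal (graphMatrix s g p c) 0 1
  · have hv : C (1 / 2) * (graphMatrix s g p c 1 1 - graphMatrix s g p c 0 0) = -v := by
      have htwo : C (1 / 2 : ℂ) * (2 : R4) = 1 := by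
        rw [← map_ofNat C, ← C_mul]
        norm_num
      simp only [graphMatrix, Matrix.of_apply, Matrix.cons_val', Matrix.cons_val_zero,
        Matrix.cons_val_one, Matrix.cons_val_fin_one]
      linear_combination -v * htwo
    exact hv ▸ Ideal.mul_mem_left _ _ (sub_mem (apply_mem_entryIdeal _ 1 1)
      (apply_mem_entryIdeal _ 0 0))

theorem length_quotient_entryIdeal_graphMatrix (hs : s ≠ 0) :
    Module.length ℂ (R4 ⧸ entryIdeal (graphMatrix s g p c)) =
      Module.length ℂ (MvPolynomial (Fin 2) ℂ ⧸ Ideal.span {g, restrictGraph s 0 p c}) := by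
  rw [length_quotient_eq_of_surjective (restrictGraph_surjective hs)
    (ker_restrictGraph_le_entryIdeal hs), map_entryIdeal_graphMatrix hs]

end GraphMatrix

section E7

variable {s t : ℂ}

/-- The diagonal polynomial `g = y² w + (t - 2) y w⁵ - (t² - 10 t + 19) / 2 w⁹` of `d¹`, with
`w = X 0` and `y = X 1`. -/
def diagPoly (t : ℂ) : MvPolynomial (Fin 2) ℂ :=
  X 1 ^ 2 * X 0 + C (t - 2) * X 1 * X 0 ^ 5 - C ((t ^ 2 - 10 * t + 19) / 2) * X 0 ^ 9

theorem dE7_eq_graphMatrix (s t : ℂ) :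
    dE7 s t = graphMatrix s (diagPoly t) (offDiagPoly (2 * t - 5)) (dE7 s t 1 0) := by
  ext1 i j
  fin_cases i <;> fin_cases j <;>
    simp [dE7, graphMatrix, planeInclusion, diagPoly, offDiagPoly] <;> ring

theorem restrictGraph_dE7_one_zero (hs : s ≠ 0) (t : ℂ) :
    restrictGraph s 0 (offDiagPoly (2 * t - 5)) (dE7 s t 1 0) = lowerLeftCurve (2 * t - 5) := by
  have hw : restrictGraph s 0 (offDiagPoly (2 * t - 5)) (C s * u) = X 0 := by
    simpa [planeInclusion] using restrictGraph_planeInclusion hs (X 0)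
  simp only [dE7, Matrix.of_apply, Matrix.cons_val', Matrix.cons_val_zero, Matrix.cons_val_one,
    Matrix.cons_val_fin_one, map_add, map_mul, map_pow, hw, restrictGraph_x, restrictGraph_y,
    algHom_C, algebraMap_eq]
  simp only [lowerLeftCurve, offDiagPoly, map_ofNat]
  ring

theorem exists_sq_add_mul_eq (n e : ℂ) : ∃ z : ℂ, z ^ 2 + n * z = e := by
  obtain ⟨δ, hδ⟩ := IsAlgClosed.exists_pow_nat_eq (n ^ 2 + 4 * e) two_pos
  exact ⟨(δ - n) / 2, by linear_combination hδ / 4⟩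

theorem exists_diagPoly_eq_mul (t : ℂ) : ∃ α β : ℂ,
    α ^ 2 + (t - 2) * α = (t ^ 2 - 10 * t + 19) / 2 ∧
    β ^ 2 + (t - 2) * β = (t ^ 2 - 10 * t + 19) / 2 ∧
    diagPoly t = X 0 * ((X 1 - C α * X 0 ^ 4) * (X 1 - C β * X 0 ^ 4)) := by
  obtain ⟨α, hα⟩ := exists_sq_add_mul_eq (t - 2) ((t ^ 2 - 10 * t + 19) / 2)
  refine ⟨α, 2 - t - α, hα, by linear_combination hα, ?_⟩
  simp only [diagPoly, ← hα, map_add, map_sub, map_mul, map_pow]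
  ring

theorem diagPoly_ne_zero (t : ℂ) : diagPoly t ≠ 0 := by
  obtain ⟨α, β, -, -, hg⟩ := exists_diagPoly_eq_mul t
  have hbranch (z : ℂ) : (X 1 - C z * X 0 ^ 4 : MvPolynomial (Fin 2) ℂ) ≠ 0 := fun h => by
    simpa using congrArg (eval ![0, 1]) h
  exact hg ▸ mul_ne_zero (X_ne_zero 0) (mul_ne_zero (hbranch α) (hbranch β))

theorem ne_zero_of_pow_eighteen_eq (ht : t ^ 3 - 21 * t + 37 = 0)
    (hs : s ^ 18 = 26220 * t ^ 2 + 67488 * t - 376912) : s ≠ 0 := by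
  rintro rfl
  refine one_ne_zero (α := ℂ) ?_
  -- The coefficient of `hs` is, up to sign, the inverse of its right-hand side modulo `ht`.
  linear_combination (399 / 4 * t ^ 2 - 2109 / 4 * t + 2785 / 4) * hs +
    (2615445 * t - 7092567) * ht

theorem pow_three_add_ne_zero (ht : t ^ 3 - 21 * t + 37 = 0) {z : ℂ}
    (hz : z ^ 2 + (t - 2) * z = (t ^ 2 - 10 * t + 19) / 2) :
    z ^ 3 + 3 * (z + (2 * t - 5)) ^ 2 ≠ 0 := by
  intro hQ
  -- Division of the cubic in `z` by the quadratic one leaves `3/2 (t² - 7) z + …`, whose leading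
  -- coefficient has the inverse `28/9 t² + 74/9 t - 392/9` modulo `ht`.
  have hz₁ : z = 5 * t - 13 := by
    linear_combination (28 / 9 * t ^ 2 + 74 / 9 * t - 392 / 9) * (hQ - (z + 5 - t) * hz) -
      ((14 / 3 * t + 37 / 3) * (z + 13 - 5 * t) + 7 * (28 / 9 * t ^ 2 + 74 / 9 * t - 392 / 9)) * ht
  subst hz₁
  refine one_ne_zero (α := ℂ) ?_
  linear_combination (4916 / 3 * t ^ 2 + 4218 * t - 70664 / 3) * hz -
    (145022 / 3 * t - 354275 / 3) * ht

end E7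

theorem stmt12_general (s t : ℂ) (hs : s ≠ 0)
    (h : ∀ z : ℂ, z ^ 2 + (t - 2) * z = (t ^ 2 - 10 * t + 19) / 2 →
      z ^ 3 + 3 * (z + (2 * t - 5)) ^ 2 ≠ 0) :
    Module.finrank ℂ
      (↥(EvenEnd (DE7 s t)) ⧸
        Submodule.comap (EvenEnd (DE7 s t)).subtype (NullHtpy (DE7 s t))) = 27 := by
  obtain ⟨α, β, hα, hβ, hg⟩ := exists_diagPoly_eq_mul t
  have hlength : Module.length ℂ (↥(EvenEnd (DE7 s t)) ⧸
      Submodule.comap (EvenEnd (DE7 s t)).subtype (NullHtpy (DE7 s t))) = 27 := by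
    change Module.length ℂ (↥(EvenEnd (twistedDifferential (dE7 s t))) ⧸
      Submodule.comap (EvenEnd (twistedDifferential (dE7 s t))).subtype
        (NullHtpy (twistedDifferential (dE7 s t)))) = 27
    rw [dE7_eq_graphMatrix, length_evenEnd_quotient_nullHtpy_graphMatrix hs (diagPoly_ne_zero t),
      length_quotient_entryIdeal_graphMatrix hs, restrictGraph_dE7_one_zero hs, hg,
      length_quotient_span_line_mul_branches (h α hα) (h β hβ)]
  rw [Module.finrank, ← Cardinal.toNat_toENat, ← Module.length_eq_rank, hlength]
  rfl

theorem stmt12 (s t : ℂ) (ht : t ^ 3 - 21 * t + 37 = 0)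
    (hs : s ^ 18 = 26220 * t ^ 2 + 67488 * t - 376912) :
    Module.finrank ℂ
      (↥(EvenEnd (DE7 s t)) ⧸
        Submodule.comap (EvenEnd (DE7 s t)).subtype (NullHtpy (DE7 s t))) = 27 := by
  exact stmt12_general s t (ne_zero_of_pow_eighteen_eq ht hs) fun _ => pow_three_add_ne_zero ht
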